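/- arXiv:2005.07674 — 3 statements merged into one kernel-verified Lean document; each statement's English description precedes it below -/
import Mathlib

section
/- Fix α > 0 and let n ≥ 2 be an integer with data x_1,…,x_n > 0 not all equal. The function π₄(φ) = √(φψ'(φ) − 1) satisfies π₄(φ) ∝ φ^{−1/2} as φ → 0⁺ and π₄(φ) ∝ φ^{−1/2} as φ → ∞; and for the Jeffreys prior π(φ,μ) = √(φψ'(φ) − 1)/μ, the integral ∫_0^∞ ∫_0^∞ φ^r μ^s √(φψ'(φ) − 1) μ^{−1} Γ(φ)^{−n} (∏_{i=1}^n x_i^{αφ−1}) μ^{nαφ} exp(−μ^α Σ_{i=1}^n x_i^α) dμ dφ is finite for all natural numbers r, s (in particular for r = s = 0, so the posterior for (φ,μ) in the Stacy model with α known is proper, with all posterior moments finite). -/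
/-!
Everything rests on elementary bounds for `ψ` and `ψ'` on `(0, ∞)`.

Convexity of `log Γ` together with `log Γ(x + 1) - log Γ(x) = log x` gives
`log x - 1 / x ≤ ψ(x) ≤ log x` (`log_sub_le_digamma`, `digamma_le_log`). Combined with the
functional equation of `ψ`, this yields `ψ(x) - ψ(1) = ∑ (1 / (1 + k) - 1 / (x + k))`, and termwise
differentiation gives `ψ'(x) = ∑ 1 / (x + k)²` (`trigamma_eq_tsum`). Telescoping comparisons then show
`1 / x + 1 / (2 x²) ≤ ψ'(x) ≤ 1 / x + 1 / x²`, that is, `1 / (2 φ) ≤ φ ψ'(φ) - 1 ≤ 1 / φ` for every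
`φ > 0`, so both power laws hold at once.

For the integral, integrating out `μ` leaves, with `S = ∑ x_i ^ α` and `c = s / α`, a multiple of
`φ ^ r √(φ ψ'(φ) - 1) Γ(nφ + c) / Γ(φ)ⁿ (∏ x_i ^ (αφ - 1)) S ^ (-nφ)`.
Instead of Stirling's formula, the logarithmic bounds for `ψ` show that
`Γ(nφ + c + 1) / Γ(φ + 1)ⁿ` is at most `n ^ (nφ)` times a power of `1 + φ` (`Gamma_ratio_le`).
The marginal is therefore bounded by a power of `1 + φ` times `((∏ x_i ^ α) (n / S)ⁿ) ^ φ`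
(`marginal_le`), and the base is less than `1` by the strict AM-GM inequality (`log_amgm`), because
the data are not all equal. Near `0` the powers of `φ` stay bounded because `n ≥ 2`.
-/

open MeasureTheory Real Filter Topology

/-- The digamma function `ψ(x) = d/dx log Γ(x)`. -/
noncomputable def digamma (x : ℝ) : ℝ := deriv (fun t => Real.log (Real.Gamma t)) x

/-- The trigamma function `ψ'(x)`, the derivative of the digamma function. -/
noncomputable def trigamma (x : ℝ) : ℝ := deriv digamma x

/-! ### Bounds for the digamma and trigamma functions -/

lemma hasDerivAt_log_Gamma {x : ℝ} (hx : 0 < x) :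
    HasDerivAt (fun t => Real.log (Real.Gamma t)) (digamma x) x :=
  ((Real.differentiableAt_Gamma fun m => by
    have : (0 : ℝ) ≤ m := m.cast_nonneg
    linarith).log (Gamma_pos_of_pos hx).ne').hasDerivAt

lemma log_Gamma_add_one {x : ℝ} (hx : 0 < x) :
    Real.log (Real.Gamma (x + 1)) = Real.log x + Real.log (Real.Gamma x) := by
  rw [Gamma_add_one hx.ne', Real.log_mul hx.ne' (Gamma_pos_of_pos hx).ne']

lemma digamma_add_one {x : ℝ} (hx : 0 < x) : digamma (x + 1) = digamma x + 1 / x := by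
  have h1 : HasDerivAt (fun t => Real.log (Real.Gamma (t + 1))) (digamma (x + 1)) x :=
    (hasDerivAt_log_Gamma (by linarith : 0 < x + 1)).comp_add_const x 1
  have h2 : HasDerivAt (fun t => Real.log t + Real.log (Real.Gamma t)) (x⁻¹ + digamma x) x :=
    (Real.hasDerivAt_log hx.ne').add (hasDerivAt_log_Gamma hx)
  have h3 := h2.congr_of_eventuallyEq (f₁ := fun t => Real.log (Real.Gamma (t + 1))) (by
    filter_upwards [lt_mem_nhds hx] with t ht using log_Gamma_add_one ht)
  rw [h1.unique h3, one_div, add_comm]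

/-- By convexity of `log Γ`, the slope `log x` of its chord over `[x, x + 1]` dominates the
derivative at the left end. -/
lemma digamma_le_log {x : ℝ} (hx : 0 < x) : digamma x ≤ Real.log x := by
  have h := convexOn_log_Gamma.le_slope_of_hasDerivAt (x := x) (y := x + 1) hx
    (by simp; linarith) (by linarith) (hasDerivAt_log_Gamma hx)
  simpa [slope_def_field, log_Gamma_add_one hx] using h

/-- By convexity of `log Γ`, the slope `log x` of its chord over `[x, x + 1]` is at most the
derivative `ψ(x + 1) = ψ(x) + 1 / x` at the right end. -/
lemma log_sub_le_digamma {x : ℝ} (hx : 0 < x) : Real.log x - 1 / x ≤ digamma x := by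
  have h := convexOn_log_Gamma.slope_le_of_hasDerivAt (x := x) (y := x + 1) hx
    (by simp; linarith) (by linarith) (hasDerivAt_log_Gamma (by linarith))
  have : Real.log x ≤ digamma (x + 1) := by
    simpa [slope_def_field, log_Gamma_add_one hx] using h
  rw [digamma_add_one hx] at this
  linarith

lemma sum_one_div_add {x : ℝ} (hx : 0 < x) (N : ℕ) :
    ∑ k ∈ Finset.range N, 1 / (x + k) = digamma (x + N) - digamma x := by
  induction N with
  | zero => simp
  | succ N ih =>
    rw [Finset.sum_range_succ, ih]
    have := digamma_add_one (x := x + N) (by positivity)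
    push_cast
    rw [← add_assoc, this]; ring

lemma tendsto_digamma_sub_log :
    Tendsto (fun y => digamma y - Real.log y) atTop (𝓝 0) := by
  refine tendsto_of_tendsto_of_tendsto_of_le_of_le' (g := fun y : ℝ => -(1 / y)) (h := fun _ => 0)
    ?_ tendsto_const_nhds ?_ ?_
  · simpa using (tendsto_inv_atTop_zero (𝕜 := ℝ)).neg
  · filter_upwards [eventually_gt_atTop 0] with y hy
    linarith [log_sub_le_digamma hy]
  · filter_upwards [eventually_gt_atTop 0] with y hy
    linarith [digamma_le_log hy]

lemma tendsto_digamma_nat_sub {x : ℝ} :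
    Tendsto (fun N : ℕ => digamma (x + N) - digamma (1 + N)) atTop (𝓝 0) := by
  have hN : ∀ y : ℝ, Tendsto (fun N : ℕ => y + (N : ℝ)) atTop atTop := fun y =>
    tendsto_atTop_add_const_left _ _ tendsto_natCast_atTop_atTop
  have hl : ∀ y : ℝ, Tendsto (fun N : ℕ => Real.log (y + N) - Real.log N) atTop (𝓝 0) := fun y =>
    by simpa [add_comm, Function.comp_def] using
      (Real.tendsto_log_comp_add_sub_log y).comp tendsto_natCast_atTop_atTop
  have h := ((tendsto_digamma_sub_log.comp (hN x)).add (hl x)).sub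
    ((tendsto_digamma_sub_log.comp (hN 1)).add (hl 1))
  simp only [add_zero, sub_zero] at h
  refine h.congr fun N => ?_
  simp only [Function.comp]; ring

lemma summable_one_div_add_sq {a : ℝ} (ha : 0 < a) :
    Summable fun k : ℕ => 1 / (a + k) ^ 2 := by
  refine ((Real.summable_one_div_nat_add_rpow a 2).2 (by norm_num)).congr fun k => ?_
  rw [abs_of_pos (by positivity), add_comm, Real.rpow_two]

lemma hasDerivAt_one_div_add (k : ℕ) {y : ℝ} (hy : 0 < y) :
    HasDerivAt (fun z : ℝ => 1 / (1 + (k : ℝ)) - 1 / (z + k)) (1 / (y + k) ^ 2) y := by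
  have hne : y + k ≠ 0 := by positivity
  have h := (((hasDerivAt_id y).add_const (k : ℝ)).inv hne).const_sub (1 / (1 + (k : ℝ)))
  simp only [id, one_div, neg_div, neg_neg] at h ⊢
  exact h

lemma digamma_eq_tsum {y : ℝ} (hy : 0 < y)
    (hs : Summable fun k : ℕ => 1 / (1 + (k : ℝ)) - 1 / (y + k)) :
    digamma y = digamma 1 + ∑' k : ℕ, (1 / (1 + (k : ℝ)) - 1 / (y + k)) := by
  have h1 := hs.hasSum.tendsto_sum_nat
  have h2 : Tendsto (fun N : ℕ => ∑ k ∈ Finset.range N, (1 / (1 + (k : ℝ)) - 1 / (y + k))) atTop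
      (𝓝 (digamma y - digamma 1)) := by
    have h3 := (tendsto_digamma_nat_sub (x := y)).const_sub (digamma y - digamma 1)
    rw [sub_zero] at h3
    refine h3.congr fun N => ?_
    rw [Finset.sum_sub_distrib, sum_one_div_add one_pos, sum_one_div_add hy]
    ring
  linarith [tendsto_nhds_unique h1 h2]

/-- The series `ψ'(x) = ∑ 1 / (x + k)²`, by termwise differentiation of
`ψ(x) = ψ(1) + ∑ (1 / (1 + k) - 1 / (x + k))`. -/
lemma trigamma_eq_tsum {x : ℝ} (hx : 0 < x) : trigamma x = ∑' k : ℕ, 1 / (x + k) ^ 2 := by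
  -- On `(a, ∞)` the differentiated series is dominated by the convergent `∑ 1 / (a + k)²`.
  obtain ⟨a, ha, hax, ha1⟩ : ∃ a : ℝ, 0 < a ∧ a < x ∧ a < 1 := by
    obtain ⟨a, h0, h1⟩ := exists_between (lt_min hx one_pos)
    exact ⟨a, h0, lt_min_iff.1 h1⟩
  have hg' : ∀ (k : ℕ) (y : ℝ), y ∈ Set.Ioi a → ‖1 / (y + k) ^ 2‖ ≤ 1 / (a + k) ^ 2 := by
    intro k y hy
    have hy' : a ≤ y := le_of_lt hy
    rw [Real.norm_of_nonneg (by positivity)]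
    gcongr
  have hg0 : Summable fun k : ℕ => 1 / (1 + (k : ℝ)) - 1 / (1 + (k : ℝ)) := by
    simp
  have hg : ∀ (k : ℕ) (y : ℝ), y ∈ Set.Ioi a →
      HasDerivAt (fun z : ℝ => 1 / (1 + (k : ℝ)) - 1 / (z + k)) (1 / (y + k) ^ 2) y :=
    fun k y hy => hasDerivAt_one_div_add k (ha.trans hy)
  generalize hG : (fun (k : ℕ) (z : ℝ) => 1 / (1 + (k : ℝ)) - 1 / (z + k)) = G at *
  have hGa : ∀ (k : ℕ) (z : ℝ), 1 / (1 + (k : ℝ)) - 1 / (z + k) = G k z := fun k z => by rw [← hG]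
  simp only [hGa] at hg hg0
  have hs : ∀ y ∈ Set.Ioi a, Summable fun k : ℕ => G k y := fun y hy =>
    summable_of_summable_hasDerivAt_of_isPreconnected (summable_one_div_add_sq ha) isOpen_Ioi
      isPreconnected_Ioi hg hg' ha1 hg0 hy
  have hd := hasDerivAt_tsum_of_isPreconnected (summable_one_div_add_sq ha) isOpen_Ioi
    isPreconnected_Ioi hg hg' ha1 hg0 hax
  have hd' : HasDerivAt digamma (∑' k : ℕ, 1 / (x + k) ^ 2) x := by
    refine (hd.const_add (digamma 1)).congr_of_eventuallyEq ?_
    filter_upwards [Ioi_mem_nhds hax] with y hy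
    have h := hs y hy
    simp only [← hGa] at h ⊢
    exact digamma_eq_tsum (ha.trans hy) h
  exact hd'.deriv

/-- Upper bound for the trigamma series, by comparison with the telescoping series of
`1 / x + 1 / x²`. -/
lemma trigamma_le {x : ℝ} (hx : 0 < x) : trigamma x ≤ 1 / x + 1 / x ^ 2 := by
  rw [trigamma_eq_tsum hx]
  refine Real.tsum_le_of_sum_range_le (fun k => by positivity) fun N => ?_
  suffices h : ∑ k ∈ Finset.range N, 1 / (x + k) ^ 2 ≤
      1 / x + 1 / x ^ 2 - (1 / (x + N) + 1 / (x + N) ^ 2) by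
    have : 0 ≤ 1 / (x + N) + 1 / (x + N) ^ 2 := by positivity
    linarith
  induction N with
  | zero => simp
  | succ N ih =>
    rw [Finset.sum_range_succ]
    push_cast
    rw [← add_assoc]
    have hy : 0 < x + N := by positivity
    generalize x + (N : ℝ) = y at *
    have : 1 / y - 1 / (y + 1) - 1 / (y + 1) ^ 2 = 1 / (y * (y + 1) ^ 2) := by
      field_simp; ring
    have : 0 < 1 / (y * (y + 1) ^ 2) := by positivity
    linarith

/-- Lower bound for the trigamma series, by comparison with the telescoping series of
`1 / x + 1 / (2 x²)`. -/
lemma le_trigamma {x : ℝ} (hx : 0 < x) : 1 / x + 1 / (2 * x ^ 2) ≤ trigamma x := by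
  rw [trigamma_eq_tsum hx]
  have hN : ∀ N : ℕ, 1 / x + 1 / (2 * x ^ 2) - (1 / (x + N) + 1 / (2 * (x + N) ^ 2)) ≤
      ∑ k ∈ Finset.range N, 1 / (x + k) ^ 2 := by
    intro N
    induction N with
    | zero => simp
    | succ N ih =>
      rw [Finset.sum_range_succ]
      push_cast
      rw [← add_assoc]
      have hy : 0 < x + N := by positivity
      generalize x + (N : ℝ) = y at *
      have : 1 / (2 * y ^ 2) - (1 / y - 1 / (y + 1)) + 1 / (2 * (y + 1) ^ 2)
          = 1 / (2 * y ^ 2 * (y + 1) ^ 2) := by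
        field_simp; ring
      have : 0 < 1 / (2 * y ^ 2 * (y + 1) ^ 2) := by positivity
      have : 1 / y ^ 2 = 1 / (2 * y ^ 2) + 1 / (2 * y ^ 2) := by field_simp; ring
      linarith
  have hlim : Tendsto (fun N : ℕ => 1 / x + 1 / (2 * x ^ 2) -
      (1 / (x + N) + 1 / (2 * (x + N) ^ 2))) atTop (𝓝 (1 / x + 1 / (2 * x ^ 2))) := by
    have h0 : Tendsto (fun N : ℕ => (x + (N : ℝ))⁻¹) atTop (𝓝 0) := tendsto_inv_atTop_zero.comp
      (tendsto_atTop_add_const_left _ _ tendsto_natCast_atTop_atTop)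
    have h1 := (h0.add ((h0.pow 2).const_mul (1 / 2))).const_sub (1 / x + 1 / (2 * x ^ 2))
    simp only [ne_eq, OfNat.ofNat_ne_zero, not_false_eq_true, zero_pow, mul_zero, add_zero,
      sub_zero] at h1
    refine h1.congr fun N => ?_
    simp only [one_div, mul_inv, inv_pow]
  exact le_of_tendsto_of_tendsto' hlim (summable_one_div_add_sq hx).hasSum.tendsto_sum_nat hN

lemma sqrt_trigamma_le {x : ℝ} (hx : 0 < x) :
    Real.sqrt (x * trigamma x - 1) ≤ x ^ (-(1 : ℝ) / 2) := by
  have h : x * trigamma x - 1 ≤ x⁻¹ := by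
    have := mul_le_mul_of_nonneg_left (trigamma_le hx) hx.le
    have e : x * (1 / x + 1 / x ^ 2) = 1 + x⁻¹ := by field_simp
    linarith
  refine (Real.sqrt_le_sqrt h).trans_eq ?_
  rw [Real.sqrt_eq_rpow, Real.inv_rpow hx.le, ← Real.rpow_neg hx.le, neg_div]

lemma le_two_mul_sqrt_trigamma {x : ℝ} (hx : 0 < x) :
    x ^ (-(1 : ℝ) / 2) ≤ 2 * Real.sqrt (x * trigamma x - 1) := by
  have h : x⁻¹ ≤ 2 ^ 2 * (x * trigamma x - 1) := by
    have := mul_le_mul_of_nonneg_left (le_trigamma hx) hx.le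
    have e : x * (1 / x + 1 / (2 * x ^ 2)) = 1 + x⁻¹ / 2 := by field_simp
    have : 0 < x⁻¹ := by positivity
    linarith
  have h2 := Real.sqrt_le_sqrt h
  rw [Real.sqrt_mul (by norm_num), Real.sqrt_sq (by norm_num)] at h2
  refine le_trans (le_of_eq ?_) h2
  rw [Real.sqrt_eq_rpow, Real.inv_rpow hx.le, ← Real.rpow_neg hx.le, neg_div]

lemma limsup_ratio_lt_top {l : Filter ℝ} (hl : ∀ᶠ x in l, 0 < x) :
    Filter.limsup (fun φ =>
        ENNReal.ofReal (Real.sqrt (φ * trigamma φ - 1) / φ ^ (-(1:ℝ)/2))) l < ⊤ ∧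
      Filter.limsup (fun φ =>
        ENNReal.ofReal (φ ^ (-(1:ℝ)/2) / Real.sqrt (φ * trigamma φ - 1))) l < ⊤ := by
  constructor
  · refine lt_of_le_of_lt (limsup_le_of_le (a := ENNReal.ofReal 1) (h := ?_)) ENNReal.ofReal_lt_top
    filter_upwards [hl] with x hx
    refine ENNReal.ofReal_le_ofReal (div_le_one_of_le₀ (sqrt_trigamma_le hx) (by positivity))
  · refine lt_of_le_of_lt (limsup_le_of_le (a := ENNReal.ofReal 2) (h := ?_)) ENNReal.ofReal_lt_top
    filter_upwards [hl] with x hx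
    exact ENNReal.ofReal_le_ofReal
      (div_le_of_le_mul₀ (Real.sqrt_nonneg _) (by norm_num) (le_two_mul_sqrt_trigamma hx))

/-! ### Growth of Gamma quotients -/

/-- Up to a polynomial factor, `Γ(nφ + c + 1) / Γ(φ + 1)ⁿ` grows at most like `n ^ (nφ)`. The
logarithmic derivative `n (ψ(nφ + c + 1) - ψ(φ + 1))` is controlled through
`log y - 1 / y ≤ ψ(y) ≤ log y`, which replaces Stirling's formula. -/
lemma log_Gamma_ratio_le {n : ℕ} (hn : 1 ≤ n) {c φ : ℝ} (hc : 0 ≤ c) (hφ : 0 ≤ φ) :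
    Real.log (Real.Gamma (n * φ + c + 1)) - n * Real.log (Real.Gamma (φ + 1)) ≤
      Real.log (Real.Gamma (c + 1)) + n * φ * Real.log n + (c + 1 + n) * Real.log (φ + 1) := by
  have hn0 : (0 : ℝ) < n := by exact_mod_cast hn
  have hd : ∀ t : ℝ, 0 ≤ t → HasDerivAt (fun t : ℝ => Real.log (Real.Gamma (n * t + c + 1)) -
      n * Real.log (Real.Gamma (t + 1)) - t * (n * Real.log n) - (c + 1 + n) * Real.log (t + 1))
      (digamma (n * t + c + 1) * n - n * digamma (t + 1) - n * Real.log n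
        - (c + 1 + n) * (1 / (t + 1))) t := by
    intro t ht
    have h1 : HasDerivAt (fun t : ℝ => (n : ℝ) * t + c + 1) n t := by
      simpa using (((hasDerivAt_id t).const_mul (n : ℝ)).add_const c).add_const 1
    have h2 : HasDerivAt (fun t : ℝ => Real.log (Real.Gamma (n * t + c + 1)))
        (digamma (n * t + c + 1) * n) t :=
      HasDerivAt.comp (h₂ := fun u => Real.log (Real.Gamma u)) t
        (hasDerivAt_log_Gamma (by positivity : (0 : ℝ) < n * t + c + 1)) h1
    have h3 : HasDerivAt (fun t : ℝ => Real.log (Real.Gamma (t + 1))) (digamma (t + 1)) t :=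
      (hasDerivAt_log_Gamma (by positivity : (0 : ℝ) < t + 1)).comp_add_const t 1
    have h4 : HasDerivAt (fun t : ℝ => Real.log (t + 1)) (1 / (t + 1)) t := by
      rw [one_div]
      exact (Real.hasDerivAt_log (by positivity : t + 1 ≠ 0)).comp_add_const t 1
    have h5 : HasDerivAt (fun t : ℝ => t * (n * Real.log n)) (n * Real.log n) t := by
      simpa using (hasDerivAt_id t).mul_const (n * Real.log n)
    exact ((h2.sub (h3.const_mul (n : ℝ))).sub h5).sub (h4.const_mul (c + 1 + n))
  have hanti := antitoneOn_of_hasDerivWithinAt_nonpos (convex_Ici (0 : ℝ))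
    (fun t ht => (hd t ht).continuousAt.continuousWithinAt)
    (fun t ht => (hd t (interior_subset ht)).hasDerivWithinAt) (by
      intro t ht
      have ht0 : 0 ≤ t := interior_subset ht
      have hup := digamma_le_log (by positivity : (0 : ℝ) < n * t + c + 1)
      have hlo := log_sub_le_digamma (by positivity : (0 : ℝ) < t + 1)
      have hlog : Real.log (n * t + c + 1) ≤
          Real.log n + Real.log (t + 1) + (c + 1) / (n * (t + 1)) := by
        have e : Real.log n + Real.log (t + 1) + Real.log (1 + (c + 1) / (n * (t + 1))) =
            Real.log (n * (t + 1) + (c + 1)) := by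
          rw [← Real.log_mul (by positivity) (by positivity),
            ← Real.log_mul (by positivity) (by positivity)]
          congr 1
          field_simp
        have h1 : Real.log (n * t + c + 1) ≤ Real.log (n * (t + 1) + (c + 1)) :=
          Real.log_le_log (by positivity) (by linarith)
        have h2 := Real.log_le_sub_one_of_pos
          (by positivity : 0 < 1 + (c + 1) / (n * (t + 1)))
        linarith
      have h1 := mul_le_mul_of_nonneg_left (hup.trans hlog) hn0.le
      have h2 := mul_le_mul_of_nonneg_left hlo hn0.le
      have e : (n : ℝ) * ((c + 1) / (n * (t + 1))) = (c + 1) * (1 / (t + 1)) := by field_simp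
      linarith)
  have h := hanti Set.self_mem_Ici hφ hφ
  simp only [mul_zero, zero_add, Gamma_one, Real.log_one, zero_mul, sub_zero] at h
  linarith

lemma Gamma_ratio_le {n : ℕ} (hn : 1 ≤ n) {c φ : ℝ} (hc : 0 ≤ c) (hφ : 0 ≤ φ) :
    Real.Gamma (n * φ + c + 1) / Real.Gamma (φ + 1) ^ n ≤
      Real.Gamma (c + 1) * Real.exp (n * φ * Real.log n) * (1 + φ) ^ (c + 1 + n) := by
  have h1 : 0 < Real.Gamma (n * φ + c + 1) := Gamma_pos_of_pos (by positivity)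
  have h2 : 0 < Real.Gamma (φ + 1) := Gamma_pos_of_pos (by positivity)
  have h3 : 0 < Real.Gamma (c + 1) := Gamma_pos_of_pos (by positivity)
  have h4 : 0 < 1 + φ := by positivity
  rw [← Real.log_le_log_iff (by positivity) (by positivity), Real.log_div (by positivity)
    (by positivity), Real.log_pow, Real.log_mul (by positivity) (by positivity),
    Real.log_mul (by positivity) (by positivity), Real.log_exp, Real.log_rpow h4, add_comm 1 φ]
  exact log_Gamma_ratio_le hn hc hφ

/-! ### Propriety of the posterior -/

/-- Strict AM-GM inequality for the non-constant data `x i ^ α`, in logarithmic form. -/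
lemma log_amgm {n : ℕ} (hn : 1 ≤ n) {x : Fin n → ℝ} (hx : ∀ i, 0 < x i)
    (hxne : ∃ i j, x i ≠ x j) {α : ℝ} (hα : 0 < α) :
    0 < n * Real.log (∑ i, x i ^ α) - n * Real.log n - ∑ i, α * Real.log (x i) := by
  have hn0 : (0 : ℝ) < n := by exact_mod_cast hn
  have hne : Nonempty (Fin n) := ⟨⟨0, hn⟩⟩
  have hS : 0 < ∑ i, x i ^ α :=
    Finset.sum_pos (fun i _ => Real.rpow_pos_of_pos (hx i) _) Finset.univ_nonempty
  obtain ⟨i, j, hij⟩ := hxne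
  have h := (Real.geom_mean_lt_arith_mean_weighted_iff_of_pos Finset.univ
    (fun _ : Fin n => 1 / (n : ℝ)) (fun i => x i ^ α) (fun _ _ => by positivity)
    (by simp [hn0.ne']) (fun i _ => (Real.rpow_pos_of_pos (hx i) _).le)).2
    ⟨i, Finset.mem_univ _, j, Finset.mem_univ _, fun h =>
      hij (Real.rpow_left_injOn hα.ne' (hx i).le (hx j).le h)⟩
  rw [← Finset.mul_sum] at h
  have hpos : ∀ i ∈ Finset.univ, 0 < (x i ^ α) ^ (1 / (n : ℝ)) := fun i _ =>
    Real.rpow_pos_of_pos (Real.rpow_pos_of_pos (hx i) _) _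
  have h2 := Real.log_lt_log (Finset.prod_pos hpos) h
  rw [Real.log_prod (fun i hi => (hpos i hi).ne'), Real.log_mul (by positivity) hS.ne', one_div,
    Real.log_inv] at h2
  simp only [Real.log_rpow (Real.rpow_pos_of_pos (hx _) _), Real.log_rpow (hx _)] at h2
  rw [← Finset.mul_sum] at h2
  have h3 := mul_lt_mul_of_pos_left h2 hn0
  rw [← mul_assoc, mul_inv_cancel₀ hn0.ne', one_mul] at h3
  linarith

/-- Integrating out `μ` by the Gamma integral. -/
lemma lintegral_inner {A α b q : ℝ} (hA : 0 ≤ A) (hα : 0 < α) (hb : 0 < b) (hq : -1 < q) :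
    ∫⁻ μ in Set.Ioi (0 : ℝ), ENNReal.ofReal (A * (μ ^ q * Real.exp (-b * μ ^ α))) =
      ENNReal.ofReal (A * (b ^ (-(q + 1) / α) * (1 / α) * Real.Gamma ((q + 1) / α))) := by
  rw [← integral_rpow_mul_exp_neg_mul_rpow hα hq hb, ← integral_const_mul]
  refine (ofReal_integral_eq_lintegral_ofReal
    ((integrableOn_rpow_mul_exp_neg_mul_rpow hq hα hb).const_mul A) ?_).symm
  filter_upwards [ae_restrict_mem measurableSet_Ioi] with μ hμ
  exact mul_nonneg hA (mul_nonneg (Real.rpow_nonneg (le_of_lt hμ) _) (Real.exp_pos _).le)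

lemma lintegral_rpow_mul_exp_lt_top (C m : ℝ) {δ : ℝ} (hδ : 0 < δ) :
    ∫⁻ φ in Set.Ioi (0 : ℝ), ENNReal.ofReal (C * ((1 + φ) ^ m * Real.exp (-δ * φ))) < ⊤ := by
  refine (Integrable.const_mul (c := C) (?_ : IntegrableOn _ _ _)).lintegral_lt_top
  refine integrable_of_isBigO_exp_neg (half_pos hδ) ?_ ?_
  · refine ContinuousOn.mul (ContinuousOn.rpow_const (by fun_prop) fun t ht => Or.inl ?_)
      (by fun_prop)
    have : (0 : ℝ) ≤ t := ht
    positivity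
  · have h1 : (fun t : ℝ => (1 + t) ^ m) =O[atTop] fun t => Real.exp (δ / 2 * (1 + t)) :=
      ((isLittleO_rpow_exp_pos_mul_atTop m (half_pos hδ)).comp_tendsto
        (tendsto_atTop_add_const_left _ 1 tendsto_id)).isBigO
    have h2 := h1.mul (Asymptotics.isBigO_refl (fun t => Real.exp (-δ * t)) atTop)
    refine h2.trans (Asymptotics.IsBigO.of_bound (Real.exp (δ / 2)) (Eventually.of_forall ?_))
    intro t
    rw [← Real.exp_add, Real.norm_of_nonneg (Real.exp_pos _).le,
      Real.norm_of_nonneg (Real.exp_pos _).le, ← Real.exp_add]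
    exact (congrArg Real.exp (by ring)).le

/-- The marginal in `φ`, obtained by integrating out `μ`, decays exponentially: the rate is the
gap in the AM-GM inequality `log_amgm`. -/
lemma marginal_le {n : ℕ} (hn : 2 ≤ n) {x : Fin n → ℝ} (hx : ∀ i, 0 < x i) {α : ℝ} (hα : 0 < α)
    (r s : ℕ) {S : ℝ} (hS : 0 < S) {φ : ℝ} (hφ : 0 < φ) :
    φ ^ r * Real.sqrt (φ * trigamma φ - 1) / Real.Gamma φ ^ n * (∏ i, x i ^ (α * φ - 1)) *
      (S ^ (-(s / α + n * φ)) * (1 / α) * Real.Gamma (n * φ + s / α)) ≤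
    Real.Gamma (s / α + 1) * (∏ i, (x i)⁻¹) * S ^ (-(s / α)) * (1 / α) *
      ((1 + φ) ^ (r + n + (s / α + 1 + n)) *
        Real.exp (-(n * Real.log S - n * Real.log n - ∑ i, α * Real.log (x i)) * φ)) := by
  have hn1 : (1 : ℝ) ≤ n := by exact_mod_cast (by lia : 1 ≤ n)
  have hn2 : (2 : ℝ) ≤ n := by exact_mod_cast hn
  have hc : 0 ≤ (s : ℝ) / α := by positivity
  generalize (s : ℝ) / α = c at *
  have hΓ := Gamma_pos_of_pos hφ
  have hΓ1 : 0 < Real.Gamma (φ + 1) := Gamma_pos_of_pos (by positivity)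
  have hΓn : 0 < Real.Gamma (n * φ + c + 1) := Gamma_pos_of_pos (by positivity)
  have hprod : ∏ i, x i ^ (α * φ - 1) =
      Real.exp ((∑ i, α * Real.log (x i)) * φ) * ∏ i, (x i)⁻¹ := by
    rw [Finset.sum_mul, Real.exp_sum, ← Finset.prod_mul_distrib]
    refine Finset.prod_congr rfl fun i _ => ?_
    rw [Real.rpow_sub (hx i), Real.rpow_one, div_eq_mul_inv, Real.rpow_def_of_pos (hx i)]
    congr 2; ring
  have hSpow : S ^ (-(c + n * φ)) = S ^ (-c) * Real.exp (-(n * Real.log S) * φ) := by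
    rw [neg_add, Real.rpow_add hS, Real.rpow_def_of_pos hS (-(n * φ))]
    congr 2; ring
  have hGn : Real.Gamma (n * φ + c) ≤ Real.Gamma (n * φ + c + 1) / φ := by
    have hy : 0 < n * φ + c := by positivity
    rw [Real.Gamma_add_one hy.ne', le_div_iff₀ hφ, mul_comm]
    exact mul_le_mul_of_nonneg_right (by nlinarith) (Gamma_pos_of_pos hy).le
  have hG1 : Real.Gamma φ = Real.Gamma (φ + 1) / φ := by
    rw [Real.Gamma_add_one hφ.ne', mul_div_cancel_left₀ _ hφ.ne']
  have hratio := Gamma_ratio_le (by lia : 1 ≤ n) hc hφ.le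
  -- The powers of `φ` combine to the exponent `r + n - 3/2`, nonnegative because `n ≥ 2`.
  have hpow : φ ^ r * φ ^ (-(1 : ℝ) / 2) * φ ^ n / φ ≤ (1 + φ) ^ ((r : ℝ) + n) := by
    have e : φ ^ r * φ ^ (-(1 : ℝ) / 2) * φ ^ n / φ = φ ^ ((r : ℝ) + (-1 / 2) + n - 1) := by
      rw [Real.rpow_sub hφ, Real.rpow_add hφ, Real.rpow_add hφ, Real.rpow_natCast,
        Real.rpow_natCast, Real.rpow_one]
    have hr : (0 : ℝ) ≤ r := r.cast_nonneg
    rw [e]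
    calc φ ^ ((r : ℝ) + (-1 / 2) + n - 1) ≤ (1 + φ) ^ ((r : ℝ) + (-1 / 2) + n - 1) :=
          Real.rpow_le_rpow hφ.le (by linarith) (by linarith)
      _ ≤ _ := Real.rpow_le_rpow_of_exponent_le (by linarith) (by linarith)
  have hPinv : 0 < ∏ i, (x i)⁻¹ := Finset.prod_pos fun i _ => inv_pos.2 (hx i)
  have hSc : 0 < S ^ (-c) := Real.rpow_pos_of_pos hS _
  set E := Real.exp ((∑ i, α * Real.log (x i)) * φ) * Real.exp (-(n * Real.log S) * φ) with hE
  set K := (∏ i, (x i)⁻¹) * S ^ (-c) * (1 / α) with hK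
  have hK0 : 0 < K := by positivity
  have hE0 : 0 < E := by positivity
  calc φ ^ r * Real.sqrt (φ * trigamma φ - 1) / Real.Gamma φ ^ n * (∏ i, x i ^ (α * φ - 1)) *
        (S ^ (-(c + n * φ)) * (1 / α) * Real.Gamma (n * φ + c))
      ≤ φ ^ r * φ ^ (-(1 : ℝ) / 2) / Real.Gamma φ ^ n * (∏ i, x i ^ (α * φ - 1)) *
        (S ^ (-(c + n * φ)) * (1 / α) * (Real.Gamma (n * φ + c + 1) / φ)) := by
        have hp : 0 ≤ ∏ i, x i ^ (α * φ - 1) :=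
          Finset.prod_nonneg fun i _ => (Real.rpow_pos_of_pos (hx i) _).le
        have hsq := sqrt_trigamma_le hφ
        have := Gamma_pos_of_pos (by positivity : 0 < n * φ + c)
        gcongr
    _ = K * E * (φ ^ r * φ ^ (-(1 : ℝ) / 2) * φ ^ n / φ) *
        (Real.Gamma (n * φ + c + 1) / Real.Gamma (φ + 1) ^ n) := by
        rw [hprod, hSpow, hG1, hE, hK, div_pow]
        field_simp
    _ ≤ K * E * (1 + φ) ^ ((r : ℝ) + n) *
        (Real.Gamma (c + 1) * Real.exp (n * φ * Real.log n) * (1 + φ) ^ (c + 1 + n)) := by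
        gcongr
    _ = Real.Gamma (c + 1) * (∏ i, (x i)⁻¹) * S ^ (-c) * (1 / α) *
        (((1 + φ) ^ ((r : ℝ) + n) * (1 + φ) ^ (c + 1 + n)) *
          (E * Real.exp (n * φ * Real.log n))) := by rw [hK]; ring
    _ = _ := by
        rw [← Real.rpow_add (by positivity), hE, ← Real.exp_add, ← Real.exp_add]
        congr 3; ring

/-- (Corollary 3.2 of the paper.) With `α` known, the Jeffreys-prior
factor `π₄(φ) = √(φψ'(φ) − 1)` satisfies `π₄(φ) ∝ φ^{-1/2}` as `φ → 0⁺` and as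
`φ → ∞`, and the Jeffreys prior `π₄(φ)/μ` yields a proper posterior for `(φ,μ)` in
the Stacy model with `α` known, with all posterior moments finite. -/
theorem jeffreys_prior_alpha_known_power_law_and_proper
    (n : ℕ) (hn : 2 ≤ n) (x : Fin n → ℝ) (hx : ∀ i, 0 < x i) (hxne : ∃ i j, x i ≠ x j)
    (α : ℝ) (hα : 0 < α) :
    (Filter.limsup (fun φ =>
        ENNReal.ofReal (Real.sqrt (φ * trigamma φ - 1) / φ ^ (-(1:ℝ)/2)))
        (𝓝[>] (0:ℝ)) < ⊤ ∧
      Filter.limsup (fun φ =>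
        ENNReal.ofReal (φ ^ (-(1:ℝ)/2) / Real.sqrt (φ * trigamma φ - 1)))
        (𝓝[>] (0:ℝ)) < ⊤) ∧
    (Filter.limsup (fun φ =>
        ENNReal.ofReal (Real.sqrt (φ * trigamma φ - 1) / φ ^ (-(1:ℝ)/2)))
        Filter.atTop < ⊤ ∧
      Filter.limsup (fun φ =>
        ENNReal.ofReal (φ ^ (-(1:ℝ)/2) / Real.sqrt (φ * trigamma φ - 1)))
        Filter.atTop < ⊤) ∧
    (∀ r s : ℕ,
      (∫⁻ φ in Set.Ioi (0:ℝ), ∫⁻ μ in Set.Ioi (0:ℝ),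
        ENNReal.ofReal (φ ^ r * μ ^ s * (Real.sqrt (φ * trigamma φ - 1) / μ) /
          Real.Gamma φ ^ n * (∏ i, x i ^ (α * φ - 1)) * μ ^ ((n : ℝ) * α * φ) *
          Real.exp (-(μ ^ α * ∑ i, x i ^ α)))) < ⊤) := by
  refine ⟨limsup_ratio_lt_top self_mem_nhdsWithin,
    limsup_ratio_lt_top (eventually_gt_atTop 0), fun r s => ?_⟩
  have hS : 0 < ∑ i, x i ^ α :=
    Finset.sum_pos (fun i _ => Real.rpow_pos_of_pos (hx i) _) ⟨⟨0, by lia⟩, Finset.mem_univ _⟩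
  refine lt_of_le_of_lt (setLIntegral_mono' measurableSet_Ioi fun φ hφ => ?_)
    (lintegral_rpow_mul_exp_lt_top
      (Real.Gamma (s / α + 1) * (∏ i, (x i)⁻¹) * (∑ i, x i ^ α) ^ (-(s / α)) * (1 / α))
      (r + n + (s / α + 1 + n)) (log_amgm (by lia) hx hxne hα))
  have hφ' : 0 < φ := hφ
  have hq : -1 < (s : ℝ) + n * α * φ - 1 := by
    have : 0 < (n : ℝ) * α * φ := by
      have : (0 : ℝ) < n := by exact_mod_cast (by lia : 0 < n)
      positivity
    have : (0 : ℝ) ≤ s := s.cast_nonneg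
    linarith
  have hΓ := Gamma_pos_of_pos hφ'
  have hP : 0 ≤ ∏ i, x i ^ (α * φ - 1) :=
    Finset.prod_nonneg fun i _ => (Real.rpow_pos_of_pos (hx i) _).le
  set A := φ ^ r * Real.sqrt (φ * trigamma φ - 1) / Real.Gamma φ ^ n * (∏ i, x i ^ (α * φ - 1))
    with hA
  have hA0 : 0 ≤ A := by positivity
  refine le_trans (le_of_eq ?_) (ENNReal.ofReal_le_ofReal (marginal_le hn hx hα r s hS hφ'))
  have e : ((s : ℝ) + n * α * φ - 1 + 1) / α = n * φ + s / α := by field_simp; ring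
  have e' : -((s : ℝ) + n * α * φ - 1 + 1) / α = -(s / α + n * φ) := by field_simp; ring
  rw [← hA, ← e, ← e', ← lintegral_inner hA0 hα hS hq]
  refine setLIntegral_congr_fun measurableSet_Ioi fun μ hμ => ?_
  have hμ' : 0 < μ := hμ
  rw [Real.rpow_sub hμ', Real.rpow_add hμ', Real.rpow_one, Real.rpow_natCast, hA,
    neg_mul, mul_comm (∑ i, x i ^ α) (μ ^ α)]
  congr 1
  ring
end

section
/- Let π(φ) = √(φψ'(φ)·(1 + 2ψ(φ) + φψ'(φ) + φψ(φ)²)). Then lim_{φ→0⁺} √φ · π(φ) = 1 (so π(φ) ∝ φ^{−1/2} as φ → 0⁺), and for the independence Jeffreys prior π(φ,μ,α) = π(φ)/μ on (0,∞)³, the integral ∫_{(0,∞)³} π(φ,μ,α) · L(φ,μ,α) dφ dμ dα is infinite for every integer n ≥ 2 and all positive data x_1,…,x_n not all equal; i.e., the posterior in the Stacy model with all parameters unknown is improper. -/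
/-!
Write `G(t) = log Γ(1 + t)`, which is real analytic on `(-1, ∞)`. Since
`log Γ(φ) = G(φ) - log φ` for `φ > 0`, one has `ψ = G' - 1/φ` and `ψ' = G'' + 1/φ²`, and the poles
cancel in the prior:
`φ · φψ'(1 + 2ψ + φψ' + φψ²) = (φ² G'' + 1)(1 + φ G'' + φ G'²) → 1` as `φ → 0⁺`
(`phi_mul_eq`, `tendsto_sqrt_mul_pi`).

For the impropriety it suffices to bound the integrand from below, for each large `α`, on the
rectangle `μ ∈ [m/2, m]`, `φ ∈ [1/(2α), 1/α]`, where `m = 1 / ∑ xᵢ`. There `αφ ∈ [1/2, 1]`, so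
every power occurring in the likelihood has an exponent in a fixed compact interval, and:
* `∑ (μ xᵢ)^α ≤ ∑ μ xᵢ ≤ 1`, so the exponential factor is at least `e⁻¹`;
* `1/Γ(φ) = φ/Γ(1 + φ)`, with `Γ(1 + φ)` close to `1`, so `(α/Γ(φ))^n` is at least `4⁻ⁿ`;
* `π(φ)` is bounded away from `0`, because it is asymptotic to `φ^{-1/2}`.
The integrand is thus at least a constant `c > 0` on a rectangle of area `m/(4α)`, and `∫ dα/α`
diverges at infinity. The rectangle bound makes any exchange of the order of integration
unnecessary.
-/

open MeasureTheory Real Filter Topology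

/-- The Stacy (generalized gamma) likelihood for data `x : Fin n → ℝ` at
parameters `(φ, μ, α)`. -/
noncomputable def stacyLikelihood (n : ℕ) (x : Fin n → ℝ) (φ μ α : ℝ) : ℝ :=
  α ^ n / Real.Gamma φ ^ n * (∏ i, x i ^ (α * φ - 1)) * μ ^ ((n : ℝ) * α * φ) *
    Real.exp (-(μ ^ α * ∑ i, x i ^ α))

/-- The independence-Jeffreys prior factor
`π(φ) = √(φψ'(φ)(1 + 2ψ(φ) + φψ'(φ) + φψ(φ)²))`. -/
noncomputable def piIndepJeffreys (φ : ℝ) : ℝ :=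
  Real.sqrt (φ * trigamma φ *
    (1 + 2 * digamma φ + φ * trigamma φ + φ * digamma φ ^ 2))

/-- The function `G(t) = log Γ(1 + t)`, the part of `log Γ` that is regular at `0`. -/
noncomputable def logGammaSucc (t : ℝ) : ℝ := Real.log (Real.Gamma (t + 1))

/-- Real analyticity is inherited from the holomorphy of the complex Gamma function. -/
lemma analyticAt_logGammaSucc {t : ℝ} (ht : -1 < t) : AnalyticAt ℝ logGammaSucc t := by
  have hC : AnalyticAt ℂ Complex.Gamma ((t + 1 : ℝ) : ℂ) := by
    have hopen : IsOpen {z : ℂ | 0 < z.re} := isOpen_lt continuous_const Complex.continuous_re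
    have hd : DifferentiableOn ℂ Complex.Gamma {z : ℂ | 0 < z.re} := by
      intro z hz
      apply (Complex.differentiableAt_Gamma z _).differentiableWithinAt
      intro m hm
      have hz' : 0 < z.re := hz
      rw [hm] at hz'
      simp only [Complex.neg_re, Complex.natCast_re] at hz'
      have : (0 : ℝ) ≤ m := Nat.cast_nonneg m
      linarith
    apply hd.analyticAt (hopen.mem_nhds _)
    simp only [Set.mem_ofPred_eq, Complex.ofReal_re]
    linarith
  have hR : AnalyticAt ℝ Real.Gamma (t + 1) := hC.re_ofReal
  have hadd : AnalyticAt ℝ (fun s : ℝ => s + 1) t := by fun_prop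
  have hcomp : AnalyticAt ℝ (fun s : ℝ => Real.Gamma (s + 1)) t :=
    AnalyticAt.fun_comp (g := Real.Gamma) (f := fun s : ℝ => s + 1) hR hadd
  exact hcomp.log (Real.Gamma_pos_of_pos (by linarith))

lemma digamma_eq {φ : ℝ} (hφ : 0 < φ) : digamma φ = deriv logGammaSucc φ - φ⁻¹ := by
  have hev : (fun t => Real.log (Real.Gamma t)) =ᶠ[𝓝 φ]
      fun t => logGammaSucc t - Real.log t := by
    filter_upwards [lt_mem_nhds hφ] with t ht
    rw [logGammaSucc, Real.Gamma_add_one ht.ne',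
      Real.log_mul ht.ne' (Real.Gamma_pos_of_pos ht).ne']
    ring
  rw [digamma, hev.deriv_eq]
  exact ((analyticAt_logGammaSucc (by linarith)).differentiableAt.hasDerivAt.sub
    (Real.hasDerivAt_log hφ.ne')).deriv

lemma trigamma_eq {φ : ℝ} (hφ : 0 < φ) :
    trigamma φ = deriv (deriv logGammaSucc) φ + (φ ^ 2)⁻¹ := by
  have hev : digamma =ᶠ[𝓝 φ] fun t => deriv logGammaSucc t - t⁻¹ := by
    filter_upwards [lt_mem_nhds hφ] with t ht using digamma_eq ht
  rw [trigamma, hev.deriv_eq]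
  have h := ((analyticAt_logGammaSucc (t := φ) (by linarith)).deriv.differentiableAt.hasDerivAt.sub
    (hasDerivAt_inv hφ.ne')).deriv
  rw [sub_neg_eq_add] at h
  exact h

/-- The poles of `ψ` and `ψ'` at `0` cancel in `φ π(φ)²`. -/
lemma phi_mul_eq {φ : ℝ} (hφ : 0 < φ) :
    φ * (φ * trigamma φ * (1 + 2 * digamma φ + φ * trigamma φ + φ * digamma φ ^ 2)) =
      (φ ^ 2 * deriv (deriv logGammaSucc) φ + 1) *
        (1 + φ * deriv (deriv logGammaSucc) φ + φ * deriv logGammaSucc φ ^ 2) := by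
  rw [digamma_eq hφ, trigamma_eq hφ]
  field_simp
  ring

lemma tendsto_sqrt_mul_pi :
    Tendsto (fun φ : ℝ => Real.sqrt φ * piIndepJeffreys φ) (𝓝[>] (0 : ℝ)) (𝓝 1) := by
  have ha := analyticAt_logGammaSucc (t := 0) (by norm_num)
  have h1 : ContinuousAt (deriv logGammaSucc) 0 := ha.deriv.continuousAt
  have h2 : ContinuousAt (deriv (deriv logGammaSucc)) 0 := ha.deriv.deriv.continuousAt
  have h3 : ContinuousAt (fun φ : ℝ => Real.sqrt ((φ ^ 2 * deriv (deriv logGammaSucc) φ + 1) *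
        (1 + φ * deriv (deriv logGammaSucc) φ + φ * deriv logGammaSucc φ ^ 2))) 0 := by
    fun_prop
  have h4 := h3.tendsto
  simp only [ne_eq, OfNat.ofNat_ne_zero, not_false_eq_true, zero_pow, zero_mul, zero_add,
    add_zero, mul_one, Real.sqrt_one] at h4
  refine (h4.mono_left nhdsWithin_le_nhds).congr' ?_
  filter_upwards [self_mem_nhdsWithin] with φ hφ
  have hφ' : 0 < φ := hφ
  rw [piIndepJeffreys, ← Real.sqrt_mul hφ'.le, phi_mul_eq hφ']

lemma limsup_ofReal_lt_top {f : ℝ → ℝ} {a : ℝ} (h : Tendsto f (𝓝[>] (0 : ℝ)) (𝓝 a)) :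
    Filter.limsup (fun φ : ℝ => ENNReal.ofReal (f φ)) (𝓝[>] (0 : ℝ)) < ⊤ := by
  rw [(ENNReal.tendsto_ofReal h).limsup_eq]
  exact ENNReal.ofReal_lt_top

lemma rpow_neg_half {φ : ℝ} (hφ : 0 < φ) : φ ^ (-(1 : ℝ) / 2) = (Real.sqrt φ)⁻¹ := by
  rw [neg_div, Real.rpow_neg hφ.le, Real.sqrt_eq_rpow]

/-- A power with exponent in `[p, q]` is bounded below by its value at one of the endpoints,
whether the base is below or above `1`. -/
lemma min_rpow_le {b p q e : ℝ} (hb : 0 < b) (hp : p ≤ e) (hq : e ≤ q) :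
    min (b ^ p) (b ^ q) ≤ b ^ e := by
  rcases le_total 1 b with h | h
  · exact (min_le_left _ _).trans (Real.rpow_le_rpow_of_exponent_le h hp)
  · exact (min_le_right _ _).trans (Real.rpow_le_rpow_of_exponent_ge hb h hq)

/-- Near `0`, the prior is bounded away from `0` and `1/Γ(φ)` is bounded below by a multiple
of `φ`. -/
lemma eventually_small : ∀ᶠ φ in 𝓝[>] (0 : ℝ),
    1 / 2 ≤ piIndepJeffreys φ ∧ φ / 2 ≤ 1 / Real.Gamma φ := by
  have h1 := tendsto_sqrt_mul_pi.eventually (lt_mem_nhds (show (1 / 2 : ℝ) < 1 by norm_num))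
  have hc : ContinuousAt (fun t : ℝ => Real.Gamma (t + 1)) 0 := by
    apply ContinuousAt.comp' (g := Real.Gamma) (f := fun t : ℝ => t + 1)
    · rw [zero_add]
      exact ((Real.differentiableOn_Gamma_Ioi 1 (by simp)).differentiableAt
        (Ioi_mem_nhds one_pos)).continuousAt
    · fun_prop
  have h2 : ∀ᶠ t in 𝓝[>] (0 : ℝ), Real.Gamma (t + 1) < 2 := by
    have := hc.tendsto
    simp only [zero_add, Real.Gamma_one] at this
    exact (this.mono_left nhdsWithin_le_nhds).eventually (gt_mem_nhds one_lt_two)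
  have h3 : ∀ᶠ t in 𝓝[>] (0 : ℝ), t < 1 :=
    (nhdsWithin_le_nhds (gt_mem_nhds (show (0 : ℝ) < 1 by norm_num)))
  filter_upwards [h1, h2, h3, self_mem_nhdsWithin] with φ h1 h2 h3 h4
  have h4' : 0 < φ := h4
  constructor
  · have hs : Real.sqrt φ ≤ 1 := Real.sqrt_le_one.mpr h3.le
    have hp : 0 ≤ piIndepJeffreys φ := Real.sqrt_nonneg _
    nlinarith
  · rw [Real.Gamma_add_one h4'.ne'] at h2
    rw [le_div_iff₀ (Real.Gamma_pos_of_pos h4')]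
    linarith

/-- The pointwise lower bound for prior times likelihood on the rectangles
`[m/2, m] × [1/(2α), 1/α]`, valid for any `m > 0` with `m ∑ xᵢ ≤ 1`. -/
lemma exists_lower_bound (n : ℕ) (x : Fin n → ℝ) (hx : ∀ i, 0 < x i) (m : ℝ) (hm : 0 < m)
    (hmx : m * ∑ i, x i ≤ 1) :
    ∃ c > 0, ∃ A ≥ 1, ∀ α > A, ∀ μ ∈ Set.Icc (m / 2) m, ∀ φ ∈ Set.Icc (1 / (2 * α)) (1 / α),
      c ≤ piIndepJeffreys φ / μ * stacyLikelihood n x φ μ α := by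
  obtain ⟨δ, hδ, hsmall⟩ := (mem_nhdsGT_iff_exists_Ioo_subset).1 eventually_small
  have hδ' : 0 < δ := hδ
  set P : ℝ := ∏ i, min (x i ^ (-(1 / 2) : ℝ)) (x i ^ (0 : ℝ)) with hP
  have hP0 : 0 < P := Finset.prod_pos fun i _ =>
    lt_min (Real.rpow_pos_of_pos (hx i) _) (Real.rpow_pos_of_pos (hx i) _)
  set Q : ℝ := min ((m / 2) ^ (0 : ℝ)) ((m / 2) ^ (n : ℝ)) with hQ
  have hQ0 : 0 < Q := lt_min (Real.rpow_pos_of_pos (by linarith) _)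
    (Real.rpow_pos_of_pos (by linarith) _)
  refine ⟨(1 / 2) / m * ((1 / 4) ^ n * P * Q * Real.exp (-1)), by positivity,
    max 1 (1 / δ), le_max_left _ _, ?_⟩
  intro α hα μ hμ φ hφ
  have hα1 : 1 < α := (le_max_left _ _).trans_lt hα
  have hαδ : 1 / δ < α := (le_max_right _ _).trans_lt hα
  have hα0 : 0 < α := by linarith
  have hμ0 : 0 < μ := by linarith [hμ.1]
  have hφ0 : 0 < φ := lt_of_lt_of_le (by positivity) hφ.1
  have hφδ : φ < δ := hφ.2.trans_lt (by rwa [one_div_lt hα0 hδ'])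
  have hlo : 1 / 2 ≤ α * φ := by
    have := (div_le_iff₀ (by positivity)).1 hφ.1
    linarith
  have hhi : α * φ ≤ 1 := by
    have := (le_div_iff₀ hα0).1 hφ.2
    linarith
  obtain ⟨hpi, hG⟩ := hsmall ⟨hφ0, hφδ⟩
  have hGpos := Real.Gamma_pos_of_pos hφ0
  have e1 : (1 / 4 : ℝ) ^ n ≤ α ^ n / Real.Gamma φ ^ n := by
    rw [← div_pow]
    apply pow_le_pow_left₀ (by norm_num)
    have : α * (φ / 2) ≤ α * (1 / Real.Gamma φ) := mul_le_mul_of_nonneg_left hG hα0.le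
    rw [mul_one_div] at this
    linarith
  have e2 : P ≤ ∏ i, x i ^ (α * φ - 1) := by
    apply Finset.prod_le_prod
    · intro i _
      exact (lt_min (Real.rpow_pos_of_pos (hx i) _) (Real.rpow_pos_of_pos (hx i) _)).le
    · intro i _
      exact min_rpow_le (hx i) (by linarith) (by linarith)
  have e3 : Q ≤ μ ^ ((n : ℝ) * α * φ) := by
    have hn : (0 : ℝ) ≤ n := Nat.cast_nonneg n
    have hnn : 0 ≤ (n : ℝ) * α * φ := by positivity
    refine (min_rpow_le (by linarith) hnn ?_).trans
      (Real.rpow_le_rpow (by linarith) hμ.1 hnn)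
    rw [mul_assoc]
    exact mul_le_of_le_one_right hn hhi
  have e4 : Real.exp (-1) ≤ Real.exp (-(μ ^ α * ∑ i, x i ^ α)) := by
    apply Real.exp_le_exp.2
    apply neg_le_neg
    -- each `μ xᵢ` is at most `1`, so raising it to the power `α ≥ 1` decreases it
    have hsum : μ * ∑ i, x i ≤ 1 :=
      (mul_le_mul_of_nonneg_right hμ.2 (Finset.sum_nonneg fun i _ => (hx i).le)).trans hmx
    refine le_trans ?_ hsum
    rw [Finset.mul_sum, Finset.mul_sum]
    apply Finset.sum_le_sum
    intro i hi
    rw [← Real.mul_rpow hμ0.le (hx i).le]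
    have hxi : μ * x i ≤ 1 := (mul_le_mul_of_nonneg_left
      (Finset.single_le_sum (fun j _ => (hx j).le) hi) hμ0.le).trans hsum
    calc (μ * x i) ^ α ≤ (μ * x i) ^ (1 : ℝ) :=
          Real.rpow_le_rpow_of_exponent_ge (mul_pos hμ0 (hx i)) hxi hα1.le
      _ = μ * x i := Real.rpow_one _
  have e5 : (1 / 2) / m ≤ piIndepJeffreys φ / μ :=
    div_le_div₀ (Real.sqrt_nonneg _) hpi hμ0 hμ.2
  have hprod : 0 < ∏ i, x i ^ (α * φ - 1) := hP0.trans_le e2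
  have hquot : 0 < α ^ n / Real.Gamma φ ^ n := by positivity
  have hpow : 0 < μ ^ ((n : ℝ) * α * φ) := hQ0.trans_le e3
  unfold stacyLikelihood
  gcongr

/-- Impropriety: integrating the rectangle bound leaves a multiple of `∫ dα / α`. -/
lemma lintegral_eq_top (n : ℕ) (hn : 2 ≤ n) (x : Fin n → ℝ) (hx : ∀ i, 0 < x i) :
    (∫⁻ α in Set.Ioi (0:ℝ), ∫⁻ μ in Set.Ioi (0:ℝ), ∫⁻ φ in Set.Ioi (0:ℝ),
        ENNReal.ofReal (piIndepJeffreys φ / μ * stacyLikelihood n x φ μ α)) = ⊤ := by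
  have : Nonempty (Fin n) := ⟨⟨0, by omega⟩⟩
  have hS : 0 < ∑ i, x i := Finset.sum_pos (fun i _ => hx i) Finset.univ_nonempty
  set m : ℝ := 1 / ∑ i, x i with hm
  have hm0 : 0 < m := by positivity
  obtain ⟨c, hc, A, hA, H⟩ := exists_lower_bound n x hx m hm0 (by rw [hm, one_div_mul_cancel hS.ne'])
  set K : ℝ := c * (m / 2) / 2 with hK
  have hK0 : 0 < K := by positivity
  have hinner : ∀ α ∈ Set.Ioi A, ENNReal.ofReal K * ENNReal.ofReal α⁻¹ ≤
      ∫⁻ μ in Set.Ioi (0:ℝ), ∫⁻ φ in Set.Ioi (0:ℝ),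
        ENNReal.ofReal (piIndepJeffreys φ / μ * stacyLikelihood n x φ μ α) := by
    intro α hα
    have hα' : A < α := hα
    have hα0 : 0 < α := by linarith
    have hφ : ∀ μ ∈ Set.Icc (m / 2) m, ENNReal.ofReal (c * (1 / (2 * α))) ≤
        ∫⁻ φ in Set.Ioi (0:ℝ),
          ENNReal.ofReal (piIndepJeffreys φ / μ * stacyLikelihood n x φ μ α) := by
      intro μ hμ
      calc ENNReal.ofReal (c * (1 / (2 * α)))
          = ∫⁻ _ in Set.Icc (1 / (2 * α)) (1 / α), ENNReal.ofReal c := by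
            rw [setLIntegral_const, Real.volume_Icc, ← ENNReal.ofReal_mul hc.le]
            congr 2
            field_simp
            norm_num
        _ ≤ ∫⁻ φ in Set.Icc (1 / (2 * α)) (1 / α),
              ENNReal.ofReal (piIndepJeffreys φ / μ * stacyLikelihood n x φ μ α) :=
            setLIntegral_mono' measurableSet_Icc fun φ hφ =>
              ENNReal.ofReal_le_ofReal (H α hα μ hμ φ hφ)
        _ ≤ _ := lintegral_mono_set fun φ hφ => lt_of_lt_of_le (by positivity) hφ.1
    calc ENNReal.ofReal K * ENNReal.ofReal α⁻¹
        = ∫⁻ _ in Set.Icc (m / 2) m, ENNReal.ofReal (c * (1 / (2 * α))) := by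
          rw [setLIntegral_const, Real.volume_Icc, ← ENNReal.ofReal_mul hK0.le,
            ← ENNReal.ofReal_mul (by positivity)]
          congr 1
          rw [hK]
          field_simp
          ring
      _ ≤ ∫⁻ μ in Set.Icc (m / 2) m, ∫⁻ φ in Set.Ioi (0:ℝ),
            ENNReal.ofReal (piIndepJeffreys φ / μ * stacyLikelihood n x φ μ α) :=
          setLIntegral_mono' measurableSet_Icc hφ
      _ ≤ _ := lintegral_mono_set fun μ hμ => lt_of_lt_of_le (by positivity) hμ.1
  have hdiv : ∫⁻ α in Set.Ioi A, ENNReal.ofReal α⁻¹ = ⊤ := by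
    by_contra hne
    apply not_integrableOn_Ioi_inv (a := A)
    refine ⟨measurable_inv.aestronglyMeasurable, ?_⟩
    rw [hasFiniteIntegral_iff_ofReal]
    · exact lt_top_iff_ne_top.2 hne
    · filter_upwards [ae_restrict_mem measurableSet_Ioi] with α hα
      have hα' : A < α := hα
      exact inv_nonneg.2 (by linarith)
  rw [eq_top_iff]
  calc (⊤ : ENNReal) = ∫⁻ α in Set.Ioi A, ENNReal.ofReal K * ENNReal.ofReal α⁻¹ := by
        rw [lintegral_const_mul' _ _ ENNReal.ofReal_ne_top, hdiv, ENNReal.mul_top]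
        exact (ENNReal.ofReal_pos.2 hK0).ne'
    _ ≤ ∫⁻ α in Set.Ioi A, ∫⁻ μ in Set.Ioi (0:ℝ), ∫⁻ φ in Set.Ioi (0:ℝ),
          ENNReal.ofReal (piIndepJeffreys φ / μ * stacyLikelihood n x φ μ α) :=
        setLIntegral_mono' measurableSet_Ioi hinner
    _ ≤ _ := lintegral_mono_set (Set.Ioi_subset_Ioi (by linarith))

/-- (Corollary 3.3 of the paper.) `lim_{φ→0⁺} √φ·π(φ) = 1`
(so `π(φ) ∝ φ^{-1/2}` as `φ → 0⁺`), and the independence Jeffreys prior `π(φ)/μ`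
yields an improper posterior in the Stacy model with all parameters unknown, for
every `n ≥ 2` and positive data not all equal. -/
theorem indep_jeffreys_prior_power_law_and_improper :
    Filter.Tendsto (fun φ : ℝ => Real.sqrt φ * piIndepJeffreys φ) (𝓝[>] (0:ℝ)) (𝓝 1) ∧
    (Filter.limsup (fun φ : ℝ => ENNReal.ofReal (piIndepJeffreys φ / φ ^ (-(1:ℝ)/2)))
        (𝓝[>] (0:ℝ)) < ⊤ ∧
      Filter.limsup (fun φ : ℝ => ENNReal.ofReal (φ ^ (-(1:ℝ)/2) / piIndepJeffreys φ))
        (𝓝[>] (0:ℝ)) < ⊤) ∧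
    (∀ (n : ℕ), 2 ≤ n → ∀ x : Fin n → ℝ, (∀ i, 0 < x i) → (∃ i j, x i ≠ x j) →
      (∫⁻ α in Set.Ioi (0:ℝ), ∫⁻ μ in Set.Ioi (0:ℝ), ∫⁻ φ in Set.Ioi (0:ℝ),
        ENNReal.ofReal (piIndepJeffreys φ / μ * stacyLikelihood n x φ μ α)) = ⊤) := by
  refine ⟨tendsto_sqrt_mul_pi, ⟨limsup_ofReal_lt_top (a := 1) ?_,
    limsup_ofReal_lt_top (a := 1) ?_⟩, fun n hn x hx _ => lintegral_eq_top n hn x hx⟩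
  · refine tendsto_sqrt_mul_pi.congr' ?_
    filter_upwards [self_mem_nhdsWithin] with φ hφ
    rw [rpow_neg_half hφ, div_inv_eq_mul, mul_comm]
  · have h := tendsto_sqrt_mul_pi.inv₀ one_ne_zero
    rw [inv_one] at h
    refine h.congr' ?_
    filter_upwards [self_mem_nhdsWithin] with φ hφ
    rw [rpow_neg_half hφ, mul_inv, div_eq_mul_inv]
end

section
/- Let n ≥ 2 be an integer and x_1,…,x_n > 0 not all equal. For the Weibull model (the Stacy model with φ = 1) and the (α,μ)-reference prior π(μ,α) = 1/(αμ), the integral ∫_0^∞ ∫_0^∞ α^{n−1} μ^{nα−1} (∏_{i=1}^n x_i^{α−1}) exp(−μ^α Σ_{i=1}^n x_i^α) dμ dα is finite (the posterior is proper); moreover, for every natural number r the integral with the integrand multiplied by the extra factor α^r is finite, while the integral with the integrand multiplied by the extra factor μ is infinite (the posterior moments of α are all finite but the posterior mean of μ is not finite). -/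
open MeasureTheory Real Filter Topology

/-!
The integral over `μ` is an explicit Gamma integral: writing `S(α) = ∑ x i ^ α`,
`∫ μ ^ q * exp (-S μ ^ α) dμ = S ^ (-s) * Γ(s) / α` with `s = (q + 1) / α`
(`lintegral_rpow_mul_exp`).

For the posterior and its `α`-moments, `q = nα - 1` gives `s = n`. If `M = max x i`, then
`S(α) ≥ M ^ α`, so `∏ x i ^ α / S(α) ^ n ≤ ∏ (x i / M) ^ α = exp (-cα)` with
`c = ∑ log (M / x i) > 0`, because the `x i` are not all equal (`exists_prod_rpow_le`). The
remaining power of `α` has exponent `n - 2 + r ≥ 0`, so the integral over `α` converges.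

For the posterior mean of `μ`, `q = nα` gives `s = n + 1 / α`. Since
`Γ(s) ≥ A ^ (s - 1) * exp (-A)` for every `A > 0`, the choice `A = e S(α)` bounds the inner integral
below by a positive constant times `exp (1 / α) / α` for `α ≤ 1`. As `exp (1 / α)` dominates
`α ^ (-(n - 1))`, the integrand in `α` is at least a constant times `1 / α` near `0`.
-/

theorem lintegral_rpow_mul_exp {p q b : ℝ} (hp : 0 < p) (hq : -1 < q) (hb : 0 < b) :
    (∫⁻ m in Set.Ioi (0:ℝ), ENNReal.ofReal (m ^ q * Real.exp (-b * m ^ p))) =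
      ENNReal.ofReal (b ^ (-(q + 1) / p) * (1 / p) * Real.Gamma ((q + 1) / p)) := by
  have h := integral_rpow_mul_exp_neg_mul_rpow hp hq hb
  have hpos : 0 < b ^ (-(q + 1) / p) * (1 / p) * Real.Gamma ((q + 1) / p) := by
    have : 0 < Real.Gamma ((q + 1) / p) := Real.Gamma_pos_of_pos (by
      have : 0 < q + 1 := by linarith
      positivity)
    positivity
  -- A nonzero Bochner integral forces integrability.
  have hint : Integrable (fun m : ℝ => m ^ q * Real.exp (-b * m ^ p))
      (volume.restrict (Set.Ioi 0)) := by
    by_contra hc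
    rw [integral_undef hc] at h
    linarith
  rw [← h, ofReal_integral_eq_lintegral_ofReal hint]
  filter_upwards [ae_restrict_mem measurableSet_Ioi] with m hm
  have : (0:ℝ) < m := hm
  simp only [Pi.zero_apply]
  positivity

/-- Obtained by restricting the Gamma integral to `(A, ∞)`. -/
theorem rpow_mul_exp_neg_le_Gamma {A s : ℝ} (hA : 0 < A) (hs : 1 ≤ s) :
    A ^ (s - 1) * Real.exp (-A) ≤ Real.Gamma s := by
  have hI := Real.GammaIntegral_convergent (s := s) (by linarith)
  have hsub : Set.Ioi A ⊆ Set.Ioi (0:ℝ) := Set.Ioi_subset_Ioi hA.le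
  rw [Real.Gamma_eq_integral (by linarith)]
  calc A ^ (s - 1) * Real.exp (-A) = ∫ u in Set.Ioi A, A ^ (s - 1) * Real.exp (-u) := by
        rw [integral_const_mul, integral_exp_neg_Ioi]
    _ ≤ ∫ u in Set.Ioi A, Real.exp (-u) * u ^ (s - 1) := by
        refine setIntegral_mono_on ((integrableOn_exp_neg_Ioi A).const_mul _)
          (hI.mono_set hsub) measurableSet_Ioi ?_
        intro u hu
        rw [mul_comm]
        exact mul_le_mul_of_nonneg_left
          (Real.rpow_le_rpow hA.le (le_of_lt hu) (by linarith)) (Real.exp_pos _).le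
    _ ≤ ∫ u in Set.Ioi 0, Real.exp (-u) * u ^ (s - 1) := by
        refine setIntegral_mono_set hI ?_ hsub.eventuallyLE
        filter_upwards [ae_restrict_mem measurableSet_Ioi] with u hu
        have : (0:ℝ) < u := hu
        simp only [Pi.zero_apply]
        positivity

theorem rpow_le_one_add {y a : ℝ} (hy : 0 < y) (ha : 0 ≤ a) (ha1 : a ≤ 1) : y ^ a ≤ 1 + y := by
  rcases le_total y 1 with h | h
  · have := Real.rpow_le_one hy.le h ha
    linarith
  · have := Real.rpow_le_rpow_of_exponent_le h ha1
    rw [Real.rpow_one] at this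
    linarith

theorem exists_prod_rpow_le {n : ℕ} (x : Fin n → ℝ) (hx : ∀ i, 0 < x i)
    (hxne : ∃ i j, x i ≠ x j) :
    ∃ c : ℝ, 0 < c ∧ ∀ α : ℝ, 0 < α →
      (∏ i, x i ^ α) ≤ Real.exp (-c * α) * (∑ i, x i ^ α) ^ n := by
  obtain ⟨i₀, j₀, hij⟩ := hxne
  obtain ⟨k, -, hk⟩ := Finset.exists_max_image Finset.univ x ⟨i₀, Finset.mem_univ _⟩
  have hk' : ∀ i, x i ≤ x k := fun i => hk i (Finset.mem_univ _)
  obtain ⟨l, hl⟩ : ∃ l, x l < x k := by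
    by_contra! hc
    exact hij ((le_antisymm (hk' _) (hc _)).trans (le_antisymm (hk' _) (hc _)).symm)
  refine ⟨∑ i, (Real.log (x k) - Real.log (x i)), ?_, ?_⟩
  · refine Finset.sum_pos' (fun i _ => ?_) ⟨l, Finset.mem_univ _, ?_⟩
    · exact sub_nonneg.2 (Real.log_le_log (hx i) (hk' i))
    · exact sub_pos.2 (Real.log_lt_log (hx l) hl)
  · intro α hα
    have h1 : (∏ i, x i ^ α) =
        Real.exp (-(∑ i, (Real.log (x k) - Real.log (x i))) * α) * (x k ^ α) ^ n := by
      have : (x k ^ α) ^ n = ∏ _i : Fin n, x k ^ α := by simp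
      rw [this, ← Finset.sum_neg_distrib, Finset.sum_mul, Real.exp_sum, ← Finset.prod_mul_distrib]
      refine Finset.prod_congr rfl fun i _ => ?_
      rw [Real.rpow_def_of_pos (hx i), Real.rpow_def_of_pos (hx k), ← Real.exp_add]
      congr 1
      ring
    rw [h1]
    have h2 : x k ^ α ≤ ∑ i, x i ^ α :=
      Finset.single_le_sum (f := fun i => x i ^ α)
        (fun i _ => Real.rpow_nonneg (hx i).le _) (Finset.mem_univ k)
    have := hx k
    gcongr

theorem posterior_moment_lt_top (n : ℕ) (hn : 2 ≤ n) (x : Fin n → ℝ) (hx : ∀ i, 0 < x i)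
    (hxne : ∃ i j, x i ≠ x j) (r : ℕ) :
    (∫⁻ α in Set.Ioi (0:ℝ), ∫⁻ μ in Set.Ioi (0:ℝ),
      ENNReal.ofReal (α ^ r * (α ^ ((n : ℝ) - 1) * μ ^ ((n : ℝ) * α - 1) *
        (∏ i, x i ^ (α - 1)) * Real.exp (-(μ ^ α * ∑ i, x i ^ α))))) < ⊤ := by
  obtain ⟨c, hc, hle⟩ := exists_prod_rpow_le x hx hxne
  obtain ⟨m, rfl⟩ : ∃ m, n = m + 2 := ⟨n - 2, by omega⟩
  have hP : 0 < ∏ i, x i := Finset.prod_pos fun i _ => hx i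
  have hG : 0 < Real.Gamma ((m + 2 : ℕ) : ℝ) := Real.Gamma_pos_of_pos (by positivity)
  set C : ℝ := (∏ i, x i)⁻¹ * Real.Gamma ((m + 2 : ℕ) : ℝ) with hC
  have hbound : ∀ α ∈ Set.Ioi (0:ℝ), (∫⁻ μ in Set.Ioi (0:ℝ),
      ENNReal.ofReal (α ^ r * (α ^ (((m + 2 : ℕ) : ℝ) - 1) * μ ^ (((m + 2 : ℕ) : ℝ) * α - 1) *
        (∏ i, x i ^ (α - 1)) * Real.exp (-(μ ^ α * ∑ i, x i ^ α))))) ≤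
      ENNReal.ofReal (C * (α ^ ((r + m : ℕ) : ℝ) * Real.exp (-c * α ^ (1:ℝ)))) := by
    intro α hα
    have hα : 0 < α := hα
    have hS : 0 < ∑ i, x i ^ α :=
      Finset.sum_pos (fun i _ => Real.rpow_pos_of_pos (hx i) _) ⟨0, Finset.mem_univ _⟩
    have hPα : (∏ i, x i ^ (α - 1)) = (∏ i, x i ^ α) * (∏ i, x i)⁻¹ := by
      rw [← Finset.prod_inv_distrib, ← Finset.prod_mul_distrib]
      refine Finset.prod_congr rfl fun i _ => ?_
      rw [Real.rpow_sub_one (hx i).ne', div_eq_mul_inv]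
    have hpow : α ^ (((m + 2 : ℕ) : ℝ) - 1) = α ^ m * α := by
      rw [show ((m + 2 : ℕ) : ℝ) - 1 = ((m + 1 : ℕ) : ℝ) by push_cast; ring, Real.rpow_natCast,
        pow_succ]
    have hK : 0 ≤ α ^ r * (α ^ m * α) * (∏ i, x i ^ (α - 1)) := by
      have : 0 ≤ ∏ i, x i ^ (α - 1) :=
        Finset.prod_nonneg fun i _ => Real.rpow_nonneg (hx i).le _
      positivity
    have hrw : ∀ μ : ℝ, ENNReal.ofReal (α ^ r * (α ^ (((m + 2 : ℕ) : ℝ) - 1) *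
        μ ^ (((m + 2 : ℕ) : ℝ) * α - 1) *
        (∏ i, x i ^ (α - 1)) * Real.exp (-(μ ^ α * ∑ i, x i ^ α)))) =
        ENNReal.ofReal (α ^ r * (α ^ m * α) * (∏ i, x i ^ (α - 1))) *
        ENNReal.ofReal (μ ^ (((m + 2 : ℕ) : ℝ) * α - 1) *
          Real.exp (-(∑ i, x i ^ α) * μ ^ α)) := by
      intro μ
      rw [← ENNReal.ofReal_mul hK, hpow, neg_mul, mul_comm (∑ i, x i ^ α)]
      congr 1
      ring
    simp_rw [hrw]
    have hq : -1 < ((m + 2 : ℕ) : ℝ) * α - 1 := by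
      have : 0 < ((m + 2 : ℕ) : ℝ) * α := by positivity
      linarith
    rw [lintegral_const_mul' _ _ ENNReal.ofReal_ne_top, lintegral_rpow_mul_exp hα hq hS,
      ← ENNReal.ofReal_mul hK]
    apply ENNReal.ofReal_le_ofReal
    rw [show (((m + 2 : ℕ) : ℝ) * α - 1 + 1) / α = ((m + 2 : ℕ) : ℝ) by field_simp; ring,
      show -(((m + 2 : ℕ) : ℝ) * α - 1 + 1) / α = -((m + 2 : ℕ) : ℝ) by field_simp; ring,
      Real.rpow_neg hS.le, Real.rpow_natCast, Real.rpow_natCast, Real.rpow_one, hPα]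
    calc α ^ r * (α ^ m * α) * ((∏ i, x i ^ α) * (∏ i, x i)⁻¹) *
          (((∑ i, x i ^ α) ^ (m + 2))⁻¹ * (1 / α) * Real.Gamma ((m + 2 : ℕ) : ℝ))
        = C * (α ^ (r + m) * ((∏ i, x i ^ α) / (∑ i, x i ^ α) ^ (m + 2))) := by
          rw [hC, pow_add]
          field_simp
          ring
      _ ≤ C * (α ^ (r + m) * Real.exp (-c * α)) := by
          gcongr
          rw [div_le_iff₀ (by positivity)]
          exact hle α hα
  refine lt_of_le_of_lt (setLIntegral_mono' measurableSet_Ioi hbound) ?_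
  have hC0 : 0 ≤ C := by positivity
  simp_rw [ENNReal.ofReal_mul hC0]
  rw [lintegral_const_mul' _ _ ENNReal.ofReal_ne_top,
    lintegral_rpow_mul_exp one_pos (by
      have : (0:ℝ) ≤ ((r + m : ℕ) : ℝ) := Nat.cast_nonneg _
      linarith) hc]
  exact ENNReal.mul_lt_top ENNReal.ofReal_lt_top ENNReal.ofReal_lt_top

theorem posterior_mean_eq_top (n : ℕ) (hn : 2 ≤ n) (x : Fin n → ℝ) (hx : ∀ i, 0 < x i) :
    (∫⁻ α in Set.Ioi (0:ℝ), ∫⁻ μ in Set.Ioi (0:ℝ),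
      ENNReal.ofReal (μ * (α ^ ((n : ℝ) - 1) * μ ^ ((n : ℝ) * α - 1) *
        (∏ i, x i ^ (α - 1)) * Real.exp (-(μ ^ α * ∑ i, x i ^ α))))) = ⊤ := by
  obtain ⟨m, rfl⟩ : ∃ m, n = m + 1 := ⟨n - 1, by omega⟩
  set K : ℝ := ∑ i, (1 + x i) with hKdef
  set P : ℝ := ∏ i, (1 + x i)⁻¹ with hPdef
  have hK : 0 < K := Finset.sum_pos (fun i _ => by linarith [hx i]) ⟨0, Finset.mem_univ _⟩
  have hP : 0 < P := Finset.prod_pos fun i _ => inv_pos.2 (by linarith [hx i])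
  set C : ℝ := P * (K⁻¹ * Real.exp (-(Real.exp 1 * K)) * (m.factorial : ℝ)⁻¹) with hC
  have hC0 : 0 < C := by positivity
  have hbound : ∀ α ∈ Set.Ioo (0:ℝ) 1, ENNReal.ofReal (C * α ^ (-1:ℝ)) ≤
      ∫⁻ μ in Set.Ioi (0:ℝ),
      ENNReal.ofReal (μ * (α ^ (((m + 1 : ℕ) : ℝ) - 1) * μ ^ (((m + 1 : ℕ) : ℝ) * α - 1) *
        (∏ i, x i ^ (α - 1)) * Real.exp (-(μ ^ α * ∑ i, x i ^ α)))) := by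
    rintro α ⟨hα, hα1⟩
    set S : ℝ := ∑ i, x i ^ α with hSdef
    have hS : 0 < S :=
      Finset.sum_pos (fun i _ => Real.rpow_pos_of_pos (hx i) _) ⟨0, Finset.mem_univ _⟩
    have hSK : S ≤ K := Finset.sum_le_sum fun i _ => rpow_le_one_add (hx i) hα.le hα1.le
    have hPP : P ≤ ∏ i, x i ^ (α - 1) := by
      refine Finset.prod_le_prod (fun i _ => (inv_pos.2 (by linarith [hx i])).le) fun i _ => ?_
      rw [show α - 1 = -(1 - α) by ring, Real.rpow_neg (hx i).le]
      exact inv_anti₀ (Real.rpow_pos_of_pos (hx i) _)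
        (rpow_le_one_add (hx i) (by linarith) (by linarith))
    have hpow : α ^ (((m + 1 : ℕ) : ℝ) - 1) = α ^ m := by
      rw [show ((m + 1 : ℕ) : ℝ) - 1 = (m : ℝ) by push_cast; ring, Real.rpow_natCast]
    have hL : 0 ≤ α ^ m * (∏ i, x i ^ (α - 1)) := by
      have := hP.le.trans hPP
      positivity
    have hrw : ∀ μ ∈ Set.Ioi (0:ℝ), ENNReal.ofReal (μ * (α ^ (((m + 1 : ℕ) : ℝ) - 1) *
        μ ^ (((m + 1 : ℕ) : ℝ) * α - 1) *
        (∏ i, x i ^ (α - 1)) * Real.exp (-(μ ^ α * S)))) =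
        ENNReal.ofReal (α ^ m * (∏ i, x i ^ (α - 1))) *
        ENNReal.ofReal (μ ^ (((m + 1 : ℕ) : ℝ) * α) * Real.exp (-S * μ ^ α)) := by
      intro μ hμ
      have hμ : 0 < μ := hμ
      rw [← ENNReal.ofReal_mul hL, hpow, neg_mul, mul_comm S, Real.rpow_sub_one hμ.ne']
      congr 1
      field_simp
    rw [setLIntegral_congr_fun measurableSet_Ioi hrw]
    have hq : -1 < ((m + 1 : ℕ) : ℝ) * α := by
      have : 0 < ((m + 1 : ℕ) : ℝ) * α := by positivity
      linarith
    rw [lintegral_const_mul' _ _ ENNReal.ofReal_ne_top, lintegral_rpow_mul_exp hα hq hS,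
      ← ENNReal.ofReal_mul hL]
    apply ENNReal.ofReal_le_ofReal
    set s : ℝ := (((m + 1 : ℕ) : ℝ) * α + 1) / α with hs
    have hs' : s = (m : ℝ) + 1 + 1 / α := by
      rw [hs]; push_cast; field_simp
    have hαinv : 0 < 1 / α := by positivity
    have hm0 : (0:ℝ) ≤ m := Nat.cast_nonneg _
    rw [neg_div, ← hs]
    -- With `A = e S` the powers of `S` cancel, leaving the factor `exp (s - 1)`.
    have hG : S⁻¹ * (Real.exp (s - 1) * Real.exp (-(Real.exp 1 * S))) ≤
        S ^ (-s) * Real.Gamma s := by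
      have h1 := rpow_mul_exp_neg_le_Gamma (A := Real.exp 1 * S) (s := s) (by positivity)
        (by linarith)
      rw [Real.mul_rpow (Real.exp_pos 1).le hS.le, ← Real.exp_mul, one_mul] at h1
      refine le_trans (le_of_eq ?_) (mul_le_mul_of_nonneg_left h1 (Real.rpow_nonneg hS.le (-s)))
      have h2 : S ^ (-s) * S ^ (s - 1) = S⁻¹ := by
        rw [← Real.rpow_add hS, show -s + (s - 1) = -1 by ring, Real.rpow_neg_one]
      rw [← h2]
      ring
    have hexp : (1 / α) ^ m * (m.factorial : ℝ)⁻¹ ≤ Real.exp (s - 1) := by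
      have h1 := Real.pow_div_factorial_le_exp (1 / α) hαinv.le m
      rw [← div_eq_mul_inv]
      exact h1.trans (Real.exp_le_exp.2 (by linarith))
    have hexp2 : Real.exp (-(Real.exp 1 * K)) ≤ Real.exp (-(Real.exp 1 * S)) := by
      apply Real.exp_le_exp.2
      have := mul_le_mul_of_nonneg_left hSK (Real.exp_pos 1).le
      linarith
    calc C * α ^ (-1:ℝ)
        = α ^ m * P * (K⁻¹ * (((1 / α) ^ m * (m.factorial : ℝ)⁻¹) *
            Real.exp (-(Real.exp 1 * K))) * (1 / α)) := by
          rw [hC, Real.rpow_neg_one, one_div_pow]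
          field_simp
      _ ≤ α ^ m * (∏ i, x i ^ (α - 1)) * (S⁻¹ * (Real.exp (s - 1) *
            Real.exp (-(Real.exp 1 * S))) * (1 / α)) := by
          gcongr
      _ ≤ α ^ m * (∏ i, x i ^ (α - 1)) * (S ^ (-s) * Real.Gamma s * (1 / α)) := by
          gcongr
      _ = _ := by ring
  refine top_le_iff.1 (le_trans ?_ (lintegral_mono_set (Set.Ioo_subset_Ioi_self : Set.Ioo (0:ℝ) 1 ⊆ Set.Ioi 0)))
  refine le_trans ?_ (setLIntegral_mono' measurableSet_Ioo hbound)
  simp_rw [ENNReal.ofReal_mul hC0.le]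
  rw [lintegral_const_mul' _ _ ENNReal.ofReal_ne_top, top_le_iff]
  refine ENNReal.mul_eq_top.2 (Or.inl ⟨by simpa using hC0, ?_⟩)
  by_contra hne
  have hmeas : AEStronglyMeasurable (fun α : ℝ => α ^ (-1:ℝ))
      (volume.restrict (Set.Ioo (0:ℝ) 1)) := by
    fun_prop
  have hnn : 0 ≤ᵐ[volume.restrict (Set.Ioo (0:ℝ) 1)] (fun α : ℝ => α ^ (-1:ℝ)) := by
    filter_upwards [ae_restrict_mem measurableSet_Ioo] with α hα
    exact Real.rpow_nonneg hα.1.le _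
  have hint := (lintegral_ofReal_ne_top_iff_integrable hmeas hnn).1 hne
  have := (intervalIntegral.integrableOn_Ioo_rpow_iff (s := -1) one_pos).1 hint
  linarith

/-- For the Weibull model (the Stacy model with `φ = 1`) and the
`(α,μ)`-reference prior `1/(αμ)`, the posterior is proper; all posterior moments of
`α` are finite, but the posterior mean of `μ` is not finite. -/
theorem weibull_reference_prior_posterior_proper
    (n : ℕ) (hn : 2 ≤ n) (x : Fin n → ℝ) (hx : ∀ i, 0 < x i) (hxne : ∃ i j, x i ≠ x j) :
    (∫⁻ α in Set.Ioi (0:ℝ), ∫⁻ μ in Set.Ioi (0:ℝ),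
      ENNReal.ofReal (α ^ ((n : ℝ) - 1) * μ ^ ((n : ℝ) * α - 1) *
        (∏ i, x i ^ (α - 1)) * Real.exp (-(μ ^ α * ∑ i, x i ^ α)))) < ⊤ ∧
    (∀ r : ℕ,
      (∫⁻ α in Set.Ioi (0:ℝ), ∫⁻ μ in Set.Ioi (0:ℝ),
        ENNReal.ofReal (α ^ r * (α ^ ((n : ℝ) - 1) * μ ^ ((n : ℝ) * α - 1) *
          (∏ i, x i ^ (α - 1)) * Real.exp (-(μ ^ α * ∑ i, x i ^ α))))) < ⊤) ∧
    (∫⁻ α in Set.Ioi (0:ℝ), ∫⁻ μ in Set.Ioi (0:ℝ),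
      ENNReal.ofReal (μ * (α ^ ((n : ℝ) - 1) * μ ^ ((n : ℝ) * α - 1) *
        (∏ i, x i ^ (α - 1)) * Real.exp (-(μ ^ α * ∑ i, x i ^ α))))) = ⊤ := by
  refine ⟨?_, posterior_moment_lt_top n hn x hx hxne, posterior_mean_eq_top n hn x hx⟩
  simpa only [pow_zero, one_mul] using posterior_moment_lt_top n hn x hx hxne 0
end
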